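/- Assume d divides q³ + 1 and let β = gcd(d, q² − q + 1). Then 3 divides d² + 8β, and the number of conjugacy classes of the group G_{d,q} equals (d² + 8β)/3. -/

import Mathlib

open Matrix

/-!
The diagonal matrices of `G = G_{d,q}` form an abelian normal subgroup `N` of index `3`. Their
diagonals are the triples of `d`-th roots of unity satisfying a recurrence of order two, so
`|N| = d²`, and those that are central are the scalar matrices `λ` with `λ ^ (q² - q + 1) = 1`, of
which there are `β`. An element of `G` has centralizer `G` if it lies in `N ∩ Z(G)`, centralizer
`N` if it is another element of `N`, and a centralizer of order `3 |N ∩ Z(G)|` otherwise. As the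
orders of the centralizers sum to `|G|` times the number `k(G)` of conjugacy classes, this gives
`3 k(G) = |N| + 8 |N ∩ Z(G)|`.
-/

open Subgroup

section ClassNumber

variable {G : Type*} [Group G] {N : Subgroup G} {b g : G} {p : ℕ}

theorem isCoatom_of_prime_index (hN : N.index.Prime) : IsCoatom N := by
  refine ⟨fun h => hN.ne_one (index_eq_one.mpr h), fun K hNK => index_eq_one.mp ?_⟩
  have hdvd : K.index ∣ N.index := Dvd.intro_left _ (relIndex_mul_index hNK.le)
  refine (hN.eq_one_or_self_of_dvd _ hdvd).resolve_right fun hK => hNK.not_ge ?_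
  have hmul : N.relIndex K * N.index = N.index := hK ▸ relIndex_mul_index hNK.le
  exact relIndex_eq_one.mp (Nat.eq_of_mul_eq_mul_right hN.pos (hmul.trans (one_mul _).symm))

theorem centralizer_singleton_eq_top_iff : centralizer {g} = ⊤ ↔ g ∈ center G := by
  rw [centralizer_eq_top_iff_subset, Set.singleton_subset_iff, SetLike.mem_coe]

theorem le_centralizer_singleton_of_mem [IsMulCommutative N] (hg : g ∈ N) :
    N ≤ centralizer {g} :=
  (le_centralizer N).trans (centralizer_le (Set.singleton_subset_iff.mpr hg))

theorem centralizer_singleton_eq_of_isCoatom [IsMulCommutative N] (hN : IsCoatom N)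
    (hg : g ∈ N) (hgc : g ∉ center G) : centralizer {g} = N :=
  (hN.le_iff.mp (le_centralizer_singleton_of_mem hg)).resolve_left
    (mt centralizer_singleton_eq_top_iff.mp hgc)

theorem inf_centralizer_singleton_eq_inf_center [IsMulCommutative N]
    (h : N ⊔ zpowers b = ⊤) : N ⊓ centralizer {b} = N ⊓ center G := by
  refine le_antisymm (le_inf inf_le_left fun n hn => ?_)
    (inf_le_inf_left N (center_le_centralizer _))
  rw [← centralizer_singleton_eq_top_iff, eq_top_iff, ← h, sup_le_iff, zpowers_le]
  exact ⟨le_centralizer_singleton_of_mem hn.1,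
    mem_centralizer_singleton_iff.mpr (mem_centralizer_singleton_iff.mp hn.2).symm⟩

theorem card_centralizer_singleton_of_notMem [N.Normal] [IsMulCommutative N]
    (hN : N.index.Prime) (hg : g ∉ N) :
    Nat.card (centralizer {g}) = N.index * Nat.card ↥(N ⊓ center G) := by
  have hsup : ∀ {K : Subgroup G}, g ∈ K → N ⊔ K = ⊤ := fun hgK =>
    (isCoatom_of_prime_index hN).2 _ (left_lt_sup.mpr fun hle => hg (hle hgK))
  have hindex : N.relIndex (centralizer {g}) = N.index := by
    rw [← relIndex_sup_left, hsup (mem_centralizer_singleton_iff.mpr rfl), relIndex_top_right]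
  rw [← inf_centralizer_singleton_eq_inf_center (hsup (mem_zpowers g)), ← hindex, mul_comm,
    ← inf_relIndex_right, relIndex, ← card_mul_index ((N ⊓ centralizer {g}).subgroupOf _),
    Nat.card_congr (subgroupOfEquivOfLe inf_le_right).toEquiv]

theorem sum_card_centralizer_singleton [Fintype G] :
    ∑ g : G, Nat.card (centralizer {g}) = Nat.card (ConjClasses G) * Nat.card G := by
  rw [← card_comm_eq_card_conjClasses_mul_card, ← Nat.card_sigma]
  refine Nat.card_congr (.trans ?_ (Equiv.subtypeProdEquivSigmaSubtype Commute).symm)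
  exact Equiv.sigmaCongrRight fun g => Equiv.subtypeEquivRight fun h =>
    mem_centralizer_singleton_iff.trans eq_comm

theorem card_centralizer_singleton_eq [N.Normal] [IsMulCommutative N] (hN : N.index.Prime)
    [DecidablePred (· ∈ N)] [DecidablePred (· ∈ N ⊓ center G)] (g : G) :
    (Nat.card (centralizer {g}) : ℤ) = N.index * Nat.card ↥(N ⊓ center G) +
      (if g ∈ N then (Nat.card N - N.index * Nat.card ↥(N ⊓ center G) : ℤ) else 0) +
      if g ∈ N ⊓ center G then (Nat.card G - Nat.card N : ℤ) else 0 := by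
  by_cases hgN : g ∈ N
  · by_cases hgc : g ∈ center G
    · rw [centralizer_singleton_eq_top_iff.mpr hgc, card_top]
      simp [hgN, hgc]
    · rw [centralizer_singleton_eq_of_isCoatom (isCoatom_of_prime_index hN) hgN hgc]
      simp [hgN, hgc]
  · rw [card_centralizer_singleton_of_notMem hN hgN]
    simp [hgN]

theorem sum_ite_mem_subgroup [Fintype G] (H : Subgroup G) [DecidablePred (· ∈ H)] (c : ℤ) :
    (∑ g : G, if g ∈ H then c else 0) = Nat.card H * c := by
  rw [← Finset.sum_filter, Finset.sum_const, nsmul_eq_mul, Nat.card_eq_fintype_card,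
    Fintype.card_subtype]

theorem card_conjClasses_mul_prime_index [Finite G] [N.Normal] [IsMulCommutative N]
    (hN : N.index.Prime) :
    Nat.card (ConjClasses G) * N.index =
      Nat.card N + (N.index ^ 2 - 1) * Nat.card ↥(N ⊓ center G) := by
  classical
  have := Fintype.ofFinite G
  have hG : (Nat.card G : ℤ) = Nat.card N * N.index := by
    rw [← N.card_mul_index, Nat.cast_mul]
  have hsum := congrArg (Nat.cast : ℕ → ℤ) (sum_card_centralizer_singleton (G := G))
  rw [Nat.cast_sum, Finset.sum_congr rfl fun g _ => card_centralizer_singleton_eq hN g,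
    Finset.sum_add_distrib, Finset.sum_add_distrib, sum_ite_mem_subgroup, sum_ite_mem_subgroup,
    Finset.sum_const, Finset.card_univ, nsmul_eq_mul, ← Nat.card_eq_fintype_card, Nat.cast_mul,
    hG] at hsum
  have hN0 : (Nat.card N : ℤ) ≠ 0 := Nat.cast_ne_zero.mpr Nat.card_pos.ne'
  zify [Nat.one_le_pow 2 _ hN.pos]
  apply mul_left_cancel₀ hN0
  linear_combination -hsum

theorem index_eq_prime_of_sup_zpowers_eq_top [N.Normal] (hp : p.Prime)
    (hbp : b ^ p ∈ N) (hb : b ∉ N) (h : N ⊔ zpowers b = ⊤) : N.index = p := by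
  have := Fact.mk hp
  have horder : orderOf (b : G ⧸ N) = p :=
    orderOf_eq_prime (by rwa [← QuotientGroup.mk_pow, QuotientGroup.eq_one_iff])
      (by rwa [Ne, QuotientGroup.eq_one_iff])
  have htop : zpowers (b : G ⧸ N) = ⊤ := by
    rw [← QuotientGroup.coe_mk', ← MonoidHom.map_zpowers, ← bot_sup_eq (Subgroup.map _ _),
      ← QuotientGroup.map_mk'_self N, ← Subgroup.map_sup, h,
      map_top_of_surjective _ (QuotientGroup.mk'_surjective N)]
  rw [index_eq_card, ← horder, ← Nat.card_zpowers, htop, card_top]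

theorem card_conjClasses_sup_zpowers_mul [Finite N] [IsMulCommutative N] (hp : p.Prime)
    (hbN : b ∈ normalizer (N : Set G)) (hbp : b ^ p ∈ N) (hb : b ∉ N) :
    Nat.card (ConjClasses ↥(N ⊔ zpowers b)) * p =
      Nat.card N + (p ^ 2 - 1) * Nat.card ↥(N ⊓ centralizer {b}) := by
  set H := N ⊔ zpowers b with hH
  have hNH : N ≤ H := le_sup_left
  let b' : H := ⟨b, (le_sup_right : zpowers b ≤ H) (mem_zpowers b)⟩
  have hnormal : (N.subgroupOf H).Normal :=
    (normal_subgroupOf_iff_le_normalizer hNH).mpr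
      (sup_le le_normalizer (zpowers_le.mpr hbN))
  have htop : N.subgroupOf H ⊔ zpowers b' = ⊤ := by
    apply Subgroup.map_injective H.subtype_injective
    simp [Subgroup.map_sup, MonoidHom.map_zpowers, b', ← MonoidHom.range_eq_map, hH]
  have hindex : (N.subgroupOf H).index = p :=
    index_eq_prime_of_sup_zpowers_eq_top hp (by simpa) (by simpa) htop
  have hcard : Nat.card (N.subgroupOf H) = Nat.card N :=
    Nat.card_congr (subgroupOfEquivOfLe hNH).toEquiv
  have hfin : Finite H := by
    refine Nat.finite_of_card_ne_zero ?_
    rw [← (N.subgroupOf H).card_mul_index, hindex, hcard]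
    exact mul_ne_zero Nat.card_pos.ne' hp.ne_zero
  have hcentralizer : N.subgroupOf H ⊓ centralizer {b'} = (N ⊓ centralizer {b}).subgroupOf H := by
    ext x
    simp [mem_subgroupOf, mem_centralizer_singleton_iff, Subtype.ext_iff, b']
  have := card_conjClasses_mul_prime_index (hindex ▸ hp)
  rw [hindex, ← inf_centralizer_singleton_eq_inf_center htop, hcentralizer] at this
  rwa [hcard, Nat.card_congr (subgroupOfEquivOfLe (inf_le_left.trans hNH)).toEquiv] at this

end ClassNumber

section DiagonalUnits

variable {n K M : Type*} [Fintype n] [DecidableEq n] [Semiring K] [Group M]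
  {f : M →* K} {σ : Equiv.Perm n} {P : (Matrix n n K)ˣ} {t : n → M}

/-- The invertible diagonal matrix with diagonal entries `f (t i)`. Parametrizing the entries by
a group `M`, rather than by `Kˣ`, allows them to be taken in a finite group of roots of unity. -/
def diagonalUnits (n : Type*) [Fintype n] [DecidableEq n] (f : M →* K) :
    (n → M) →* (Matrix n n K)ˣ :=
  ((diagonalRingHom n K : (n → K) →* Matrix n n K).comp (f.compLeft n)).toHomUnits

theorem coe_diagonalUnits (f : M →* K) (t : n → M) :
    (diagonalUnits n f t : Matrix n n K) = diagonal (f ∘ t) := rfl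

theorem diagonalUnits_injective (hf : Function.Injective f) :
    Function.Injective (diagonalUnits n f) := fun _ _ h =>
  hf.comp_left (diagonal_injective (congrArg Units.val h))

theorem mul_diagonalUnits_of_permMatrix (f : M →* K)
    (hP : (P : Matrix n n K) = σ.permMatrix K) (t : n → M) :
    P * diagonalUnits n f t = diagonalUnits n f (t ∘ σ) * P := by
  ext i j
  rw [Units.val_mul, Units.val_mul, hP, coe_diagonalUnits, coe_diagonalUnits, mul_diagonal,
    diagonal_mul, Equiv.Perm.permMatrix, PEquiv.toMatrix_toPEquiv_apply, Pi.single_apply]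
  split_ifs with h <;> simp [h]

theorem permMatrix_notMem_range_diagonalUnits [Nontrivial K] (f : M →* K)
    (hP : (P : Matrix n n K) = σ.permMatrix K) (hσ : σ ≠ 1) :
    P ∉ (diagonalUnits n f).range := by
  rintro ⟨t, ht⟩
  obtain ⟨i, hi⟩ : ∃ i, σ i ≠ i := by simpa [Equiv.ext_iff] using hσ
  have hentry : diagonal (f ∘ t) i (σ i) = σ.permMatrix K i (σ i) := by
    rw [← hP, ← ht, coe_diagonalUnits]
  rw [diagonal_apply_ne _ hi.symm, Equiv.Perm.permMatrix, PEquiv.toMatrix_toPEquiv_apply,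
    Pi.single_eq_same] at hentry
  exact zero_ne_one hentry

theorem mem_normalizer_map_diagonalUnits (f : M →* K)
    (hP : (P : Matrix n n K) = σ.permMatrix K) {T : Subgroup (n → M)}
    (hT : ∀ t, t ∘ σ ∈ T ↔ t ∈ T) :
    P ∈ normalizer (T.map (diagonalUnits n f) : Set (Matrix n n K)ˣ) := by
  refine mem_normalizer_iff.mpr fun X => ⟨?_, ?_⟩
  · rintro ⟨t, ht, rfl⟩
    refine ⟨t ∘ σ, (hT t).mpr ht, ?_⟩
    rw [eq_mul_inv_iff_mul_eq, mul_diagonalUnits_of_permMatrix f hP]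
  · rintro ⟨t, ht, hX⟩
    have ht' : (t ∘ σ.symm) ∘ σ = t := by
      rw [Function.comp_assoc, σ.symm_comp_self, Function.comp_id]
    refine ⟨t ∘ σ.symm, (hT _).mp (ht'.symm ▸ ht), mul_left_cancel (a := P) ?_⟩
    rw [mul_diagonalUnits_of_permMatrix f hP, ht', hX, inv_mul_cancel_right]

theorem card_map_diagonalUnits_inf_centralizer (hf : Function.Injective f)
    (hP : (P : Matrix n n K) = σ.permMatrix K) (T : Subgroup (n → M)) :
    Nat.card ↥(T.map (diagonalUnits n f) ⊓ centralizer {P}) =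
      Nat.card {t // t ∈ T ∧ t ∘ σ = t} := by
  have hmap : T.map (diagonalUnits n f) ⊓ centralizer {P} =
      (T ⊓ (centralizer {P}).comap (diagonalUnits n f)).map (diagonalUnits n f) :=
    SetLike.coe_injective (Set.image_inter_preimage _ _ _).symm
  rw [hmap, card_map_of_injective (f := diagonalUnits n f) (diagonalUnits_injective hf)]
  refine Nat.card_congr (Equiv.subtypeEquivRight fun t => ?_)
  rw [mem_inf, mem_comap, mem_centralizer_singleton_iff, mul_diagonalUnits_of_permMatrix f hP,
    mul_left_inj, (diagonalUnits_injective hf).eq_iff, eq_comm (a := t)]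

theorem closure_pair_diagonalUnits_permMatrix (f : M →* K)
    (hP : (P : Matrix n n K) = σ.permMatrix K) (t : n → M) :
    Subgroup.closure {diagonalUnits n f t, P} =
      (Subgroup.closure {t, t ∘ σ}).map (diagonalUnits n f) ⊔ zpowers P := by
  have hconj : diagonalUnits n f (t ∘ σ) = P * diagonalUnits n f t * P⁻¹ :=
    eq_mul_inv_of_mul_eq (mul_diagonalUnits_of_permMatrix f hP t).symm
  have hmem : diagonalUnits n f t ∈ Subgroup.closure {diagonalUnits n f t, P} :=
    subset_closure (Set.mem_insert _ _)
  have hPmem : P ∈ Subgroup.closure {diagonalUnits n f t, P} :=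
    subset_closure (Set.mem_insert_of_mem _ rfl)
  rw [MonoidHom.map_closure, Set.image_pair]
  refine le_antisymm ((closure_le _).mpr (Set.pair_subset ?_ ?_))
    (sup_le ((closure_le _).mpr (Set.pair_subset hmem ?_)) (zpowers_le.mpr hPmem))
  · exact mem_sup_left (subset_closure (Set.mem_insert _ _))
  · exact mem_sup_right (mem_zpowers P)
  · exact hconj ▸ mul_mem (mul_mem hPmem hmem) (inv_mem hPmem)

theorem pow_eq_one_of_permMatrix {k : ℕ} (hP : (P : Matrix n n K) = σ.permMatrix K)
    (hσ : σ ^ k = 1) : P ^ k = 1 := by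
  have hhom : (P : Matrix n n K) = permMatrixHom σ⁻¹ := by simpa using hP
  ext1
  rw [Units.val_pow_eq_pow_val, hhom, ← map_pow, inv_pow, hσ, inv_one, map_one, Units.val_one]

theorem finRotate_three_permMatrix :
    (finRotate 3).permMatrix K = !![0, 1, 0; 0, 0, 1; 1, 0, 0] := by
  ext i j
  fin_cases i <;> fin_cases j <;> rfl

end DiagonalUnits

section CyclicRecurrence

variable {M : Type*} [CommGroup M] {q : ℕ} {s t : Fin 3 → M} {g : M}

/-- The triples, indexed modulo `3`, that satisfy `t (k + 2) = t (k + 1) ^ q / t k ^ q ^ 2`. In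
additive notation this recurrence has characteristic polynomial `X² - qX + q²`, a factor of
`X³ + q³`, which is `X³ - 1` if the exponent of `M` divides `q³ + 1`. The diagonal matrices in
`G_{d,q}` are those whose entries form such a triple of `d`-th roots of unity. -/
def cyclicRecurrence (M : Type*) [CommGroup M] (q : ℕ) : Subgroup (Fin 3 → M) where
  carrier := {t | ∀ k, t k ^ q ^ 2 * t (k + 2) = t (k + 1) ^ q}
  one_mem' k := by simp
  mul_mem' hs ht k := by
    simp only [Pi.mul_apply, mul_pow, ← hs k, ← ht k, mul_mul_mul_comm]
  inv_mem' ht k := by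
    simp only [Pi.inv_apply, inv_pow, ← ht k, mul_inv]

theorem mem_cyclicRecurrence :
    t ∈ cyclicRecurrence M q ↔ ∀ k, t k ^ q ^ 2 * t (k + 2) = t (k + 1) ^ q := Iff.rfl

theorem comp_finRotate_mem_cyclicRecurrence :
    t ∘ finRotate 3 ∈ cyclicRecurrence M q ↔ t ∈ cyclicRecurrence M q := by
  simp only [mem_cyclicRecurrence, Function.comp_apply, finRotate_apply]
  nth_rw 2 [← (Equiv.addRight (1 : Fin 3)).forall_congr_right]
  simp only [Equiv.coe_addRight, add_right_comm]

theorem eq_of_mem_cyclicRecurrence (hs : s ∈ cyclicRecurrence M q)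
    (ht : t ∈ cyclicRecurrence M q) (h0 : s 0 = t 0) (h1 : s 1 = t 1) : s = t := by
  have h2 : s 2 = t 2 := by
    have hs0 : s 0 ^ q ^ 2 * s 2 = s 1 ^ q := hs 0
    have ht0 : t 0 ^ q ^ 2 * t 2 = t 1 ^ q := ht 0
    rwa [h0, h1, ← ht0, mul_right_inj] at hs0
  ext k
  fin_cases k
  exacts [h0, h1, h2]

theorem cons_mem_cyclicRecurrence (hM : ∀ x : M, x ^ (q ^ 3 + 1) = 1) (x y : M) :
    ![x, y, y ^ q / x ^ q ^ 2] ∈ cyclicRecurrence M q := by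
  have hinv (z : M) : z ^ q ^ 3 = z⁻¹ := eq_inv_of_mul_eq_one_left (by rw [← pow_succ, hM])
  have h1 : y ^ q ^ 2 * x = (y ^ q / x ^ q ^ 2) ^ q := by
    rw [div_pow, ← pow_mul, ← pow_mul, ← pow_succ, hinv, div_inv_eq_mul, sq]
  have h2 : (y ^ q / x ^ q ^ 2) ^ q ^ 2 * y = x ^ q := by
    rw [div_pow, ← pow_mul, ← pow_mul, ← pow_succ', ← pow_add, pow_succ' q 3, pow_mul' x,
      hinv, hinv, inv_pow, div_inv_eq_mul, mul_right_comm, inv_mul_cancel, one_mul]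
  intro k
  fin_cases k
  exacts [mul_div_cancel (x ^ q ^ 2) (y ^ q), h1, h2]

theorem card_cyclicRecurrence (hM : ∀ x : M, x ^ (q ^ 3 + 1) = 1) :
    Nat.card (cyclicRecurrence M q) = Nat.card M ^ 2 := by
  rw [sq, ← Nat.card_prod]
  refine Nat.card_congr
    (Equiv.ofBijective (fun t => (t.1 0, t.1 1)) ⟨fun s t h => ?_, fun p => ?_⟩)
  · exact Subtype.ext (eq_of_mem_cyclicRecurrence s.2 t.2 (congrArg Prod.fst h)
      (congrArg Prod.snd h))
  · exact ⟨⟨_, cons_mem_cyclicRecurrence hM p.1 p.2⟩, rfl⟩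

theorem const_mem_cyclicRecurrence {x : M} :
    Function.const (Fin 3) x ∈ cyclicRecurrence M q ↔ x ^ (q ^ 2 - q + 1) = 1 := by
  have hq : q ^ 2 + 1 = (q ^ 2 - q + 1) + q := by
    have := Nat.le_self_pow two_ne_zero q
    lia
  simp only [mem_cyclicRecurrence, Function.const_apply, forall_const, ← pow_succ, hq,
    pow_add x _ q, mul_eq_right]

theorem card_comp_finRotate_eq_self_mem_cyclicRecurrence :
    Nat.card {t // t ∈ cyclicRecurrence M q ∧ t ∘ finRotate 3 = t} =
      Nat.card (powMonoidHom (q ^ 2 - q + 1) : M →* M).ker := by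
  refine (Nat.card_congr (Equiv.ofBijective
    (fun x => ⟨Function.const _ x.1, const_mem_cyclicRecurrence.mpr x.2, rfl⟩)
    ⟨fun x y h => ?_, ?_⟩)).symm
  · exact Subtype.ext (congrFun (congrArg Subtype.val h) 0)
  · rintro ⟨t, ht, hrot⟩
    have hconst : Function.const _ (t 0) = t := by
      ext k
      fin_cases k
      exacts [rfl, (congrFun hrot 0).symm, congrFun hrot 2]
    exact ⟨⟨t 0, const_mem_cyclicRecurrence.mp (hconst.symm ▸ ht)⟩, Subtype.ext hconst⟩

theorem closure_pair_eq_cyclicRecurrence (hg : ∀ x : M, x ∈ zpowers g)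
    (hM : ∀ x : M, x ^ (q ^ 3 + 1) = 1) :
    Subgroup.closure {![1, g, g ^ q], ![1, g, g ^ q] ∘ finRotate 3} = cyclicRecurrence M q := by
  have ha : ![1, g, g ^ q] ∈ cyclicRecurrence M q := by
    simpa using cons_mem_cyclicRecurrence hM 1 g
  have ha' := comp_finRotate_mem_cyclicRecurrence.mpr ha
  refine le_antisymm (closure_le _ |>.mpr (Set.pair_subset ha ha')) fun t ht => ?_
  obtain ⟨i, hi⟩ := hg (t 0)
  obtain ⟨j, hj⟩ := hg (t 1 / (t 0) ^ q)
  have heq : t = (![1, g, g ^ q] ∘ finRotate 3) ^ i * ![1, g, g ^ q] ^ j := by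
    refine eq_of_mem_cyclicRecurrence ht (mul_mem (zpow_mem ha' i) (zpow_mem ha j)) ?_ ?_
    · simp [← hi]
    · simp [← hi, hj, ← zpow_natCast, zpow_comm g i q]
  rw [heq]
  exact mul_mem (zpow_mem (subset_closure (by simp)) i) (zpow_mem (subset_closure (by simp)) j)

end CyclicRecurrence

theorem card_conjClasses_closure_diagonalUnits_finRotate {K M : Type*} [Semiring K] [Nontrivial K]
    [CommGroup M] [Finite M] {q : ℕ} {f : M →* K} (hf : Function.Injective f) {g : M}
    (hg : ∀ x : M, x ∈ zpowers g) (hM : ∀ x : M, x ^ (q ^ 3 + 1) = 1)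
    {B : (Matrix (Fin 3) (Fin 3) K)ˣ} (hB : (B : Matrix _ _ K) = (finRotate 3).permMatrix K) :
    Nat.card (ConjClasses ↥(Subgroup.closure {diagonalUnits (Fin 3) f ![1, g, g ^ q], B})) * 3 =
      Nat.card M ^ 2 + 8 * (Nat.card M).gcd (q ^ 2 - q + 1) := by
  have := IsCyclic.mk ⟨g, hg⟩
  have : Finite ((cyclicRecurrence M q).map (diagonalUnits (Fin 3) f)) :=
    ((Set.toFinite _).image (diagonalUnits (Fin 3) f)).to_subtype
  have hnormalizer := mem_normalizer_map_diagonalUnits f hB (T := cyclicRecurrence M q)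
    fun t => comp_finRotate_mem_cyclicRecurrence
  have hcube : B ^ 3 = 1 := pow_eq_one_of_permMatrix hB (by decide)
  have hnotMem : B ∉ (cyclicRecurrence M q).map (diagonalUnits (Fin 3) f) :=
    mt (map_le_range _ _ ·) (permMatrix_notMem_range_diagonalUnits f hB (by decide))
  rw [closure_pair_diagonalUnits_permMatrix f hB, closure_pair_eq_cyclicRecurrence hg hM,
    card_conjClasses_sup_zpowers_mul Nat.prime_three hnormalizer (hcube ▸ one_mem _) hnotMem,
    card_map_of_injective (f := diagonalUnits (Fin 3) f) (diagonalUnits_injective hf),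
    card_cyclicRecurrence hM,
    card_map_diagonalUnits_inf_centralizer hf hB,
    card_comp_finRotate_eq_self_mem_cyclicRecurrence, IsCyclic.card_powMonoidHom_ker]
  norm_num

theorem stmt_15_general {K : Type*} [CommSemiring K] [Nontrivial K] {d q : ℕ}
    (hdvd : d ∣ q ^ 3 + 1) {ξ : K} (hξ : IsPrimitiveRoot ξ d)
    {A B : (Matrix (Fin 3) (Fin 3) K)ˣ}
    (hA : (A : Matrix (Fin 3) (Fin 3) K) = Matrix.diagonal ![1, ξ, ξ ^ q])
    (hB : (B : Matrix (Fin 3) (Fin 3) K) = !![0, 1, 0; 0, 0, 1; 1, 0, 0]) :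
    3 ∣ d ^ 2 + 8 * Nat.gcd d (q ^ 2 - q + 1) ∧
    Nat.card (ConjClasses ↥(Subgroup.closure {A, B})) =
      (d ^ 2 + 8 * Nat.gcd d (q ^ 2 - q + 1)) / 3 := by
  have hd : d ≠ 0 := ne_zero_of_dvd_ne_zero (Nat.succ_ne_zero _) hdvd
  lift ξ to Kˣ using hξ.isUnit hd
  obtain rfl : d = orderOf ξ := (IsPrimitiveRoot.coe_units_iff.mp hξ).eq_orderOf
  have : Finite (zpowers ξ) := finite_zpowers.mpr (orderOf_ne_zero_iff.mp hd)
  let f : zpowers ξ →* K := (Units.coeHom K).comp (zpowers ξ).subtype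
  have hf : Function.Injective f := Units.val_injective.comp Subtype.val_injective
  let g : zpowers ξ := ⟨ξ, mem_zpowers ξ⟩
  have hg (x : zpowers ξ) : x ∈ zpowers g := by
    obtain ⟨_, i, rfl⟩ := x
    exact ⟨i, rfl⟩
  have hexp (x : zpowers ξ) : x ^ (q ^ 3 + 1) = 1 :=
    orderOf_dvd_iff_pow_eq_one.mp
      ((Nat.card_zpowers ξ ▸ orderOf_dvd_natCard x).trans hdvd)
  have hAdiag : A = diagonalUnits (Fin 3) f ![1, g, g ^ q] := by
    ext1
    rw [hA, coe_diagonalUnits]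
    congr 1
    ext k
    fin_cases k <;> rfl
  have hcard := card_conjClasses_closure_diagonalUnits_finRotate hf hg hexp
    (hB.trans finRotate_three_permMatrix.symm)
  rw [← hAdiag, Nat.card_zpowers] at hcard
  lia

/-- Assume `d ∣ q³+1` and let `β = gcd(d, q²−q+1)`.  Then `3 ∣ d² + 8β` and the number
of conjugacy classes of `G_{d,q}` equals `(d² + 8β)/3`. -/
theorem stmt_15 (d q : ℕ) (hd : 1 ≤ d) (hq : q < d) (hdq : Nat.gcd d q = 1)
    (hdvd : d ∣ q ^ 3 + 1)
    (ξ : ℂ) (hξ : IsPrimitiveRoot ξ d)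
    (A B : (Matrix (Fin 3) (Fin 3) ℂ)ˣ)
    (hA : (A : Matrix (Fin 3) (Fin 3) ℂ) = Matrix.diagonal ![1, ξ, ξ ^ q])
    (hB : (B : Matrix (Fin 3) (Fin 3) ℂ) = !![0,1,0; 0,0,1; 1,0,0]) :
    3 ∣ d ^ 2 + 8 * Nat.gcd d (q ^ 2 - q + 1) ∧
    Nat.card (ConjClasses ↥(Subgroup.closure {A, B})) =
      (d ^ 2 + 8 * Nat.gcd d (q ^ 2 - q + 1)) / 3 :=
  stmt_15_general hdvd hξ hA hB
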